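/- For fixed ρ₁, ρ₂ ∈ (0,1) with ρ₁ + ρ₂ < 1, the quantity x₁·x₂·Ψ(x₁,x₂;ρ₁,ρ₂) is monotone nondecreasing in x₁ and in x₂ on (0,1]: that is, if 0 < x₁ ≤ x₁' ≤ 1 and 0 < x₂ ≤ x₂' ≤ 1 then x₁x₂Ψ(x₁,x₂;ρ₁,ρ₂) ≤ x₁'x₂'Ψ(x₁',x₂';ρ₁,ρ₂). -/

import Mathlib

open MeasureTheory Real

noncomputable def betaFn (a b : ℝ) : ℝ := Real.Gamma a * Real.Gamma b / Real.Gamma (a + b)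

noncomputable def incBeta (z a b : ℝ) : ℝ := ∫ t in (0:ℝ)..z, t ^ (a - 1) * (1 - t) ^ (b - 1)

noncomputable def regIncBeta (z a b : ℝ) : ℝ := incBeta z a b / betaFn a b

noncomputable def mvBeta (ρ₁ ρ₂ ρ₀ : ℝ) : ℝ :=
  Real.Gamma ρ₁ * Real.Gamma ρ₂ * Real.Gamma ρ₀ / Real.Gamma (ρ₁ + ρ₂ + ρ₀)

noncomputable def Psi (x₁ x₂ ρ₁ ρ₂ : ℝ) : ℝ :=
  (x₁ * x₂)⁻¹ * (mvBeta ρ₁ ρ₂ (1 - ρ₁ - ρ₂))⁻¹ *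
    ∫ p in {p : ℝ × ℝ | 0 ≤ p.1 ∧ 0 ≤ p.2 ∧ p.1 + p.2 ≤ 1},
      regIncBeta p.1 ρ₁ (1 - ρ₁) ^ (1 / x₁ - 1) *
        regIncBeta p.2 ρ₂ (1 - ρ₂) ^ (1 / x₂ - 1) *
        p.1 ^ (ρ₁ - 1) * p.2 ^ (ρ₂ - 1) * (1 - p.1 - p.2) ^ (-ρ₁ - ρ₂)

/-!
Up to the factor `B(ρ₁, ρ₂, 1 - ρ₁ - ρ₂)⁻¹`, the quantity `x₁ x₂ Ψ(x₁, x₂; ρ₁, ρ₂)` is the integral of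
`I(t₁) ^ (1 / x₁ - 1) * I(t₂) ^ (1 / x₂ - 1)` against the Dirichlet weight. Here `I` is the
distribution function of a Beta law, so it takes values in `[0, 1]` and its powers decrease in the
exponent, which in turn decreases in `xᵢ`. Comparing the integrals requires the Dirichlet weight to
be integrable: multiplying it by `1 = t₁ + t₂ + (1 - t₁ - t₂)` splits it into three terms, in each of
which one of the three singular factors has become bounded.
-/

section

open ProbabilityTheory Set

variable {a b c : ℝ}

lemma cdf_betaMeasure_eq_integral (ha : 0 < a) (hb : 0 < b) (z : ℝ) :
    cdf (betaMeasure a b) z = ∫ t in Iic z, betaPDFReal a b t := by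
  have : IsProbabilityMeasure (betaMeasure a b) := isProbabilityMeasureBeta ha hb
  have betaPDFReal_nonneg (t : ℝ) : 0 ≤ betaPDFReal a b t := by
    by_cases ht : 0 < t ∧ t < 1
    · exact (betaPDFReal_pos ht.1 ht.2 ha hb).le
    · simp only [betaPDFReal, if_neg ht, le_refl]
  rw [cdf_eq_real, betaMeasure, measureReal_def, withDensity_apply _ measurableSet_Iic,
    integral_eq_lintegral_of_nonneg_ae (ae_of_all _ betaPDFReal_nonneg) (by fun_prop)]
  rfl

lemma regIncBeta_eq_cdf {z : ℝ} (ha : 0 < a) (hb : 0 < b) (hz : z ∈ Icc (0 : ℝ) 1) :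
    regIncBeta z a b = cdf (betaMeasure a b) z := by
  have pdf_eq_zero : ∀ t ∈ Iic z \ Ioc 0 z, betaPDFReal a b t = 0 := fun t ht ↦
    if_neg fun h ↦ ht.2 ⟨h.1, ht.1⟩
  have pdf_eq : ∀ t ∈ Ioo 0 z,
      betaPDFReal a b t = t ^ (a - 1) * (1 - t) ^ (b - 1) / betaFn a b := by
    intro t ht
    rw [betaPDFReal, if_pos ⟨ht.1, ht.2.trans_le hz.2⟩, mul_assoc, one_div_mul_eq_div]
    rfl
  calc regIncBeta z a b
      = ∫ t in Ioo 0 z, t ^ (a - 1) * (1 - t) ^ (b - 1) / betaFn a b := by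
        rw [regIncBeta, incBeta, intervalIntegral.integral_of_le hz.1,
          integral_Ioc_eq_integral_Ioo, integral_div]
    _ = ∫ t in Ioc 0 z, betaPDFReal a b t := by
        rw [integral_Ioc_eq_integral_Ioo, setIntegral_congr_fun measurableSet_Ioo pdf_eq]
    _ = ∫ t in Iic z, betaPDFReal a b t :=
        (setIntegral_eq_of_subset_of_forall_sdiff_eq_zero measurableSet_Iic Ioc_subset_Iic_self
          pdf_eq_zero).symm
    _ = cdf (betaMeasure a b) z := (cdf_betaMeasure_eq_integral ha hb z).symm

/-- The triangle with vertices `(0, 0)`, `(1, 0)`, `(0, 1)`: the domain of integration in `Psi`. Its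
points stand for those of the standard simplex, with `1 - p.1 - p.2` as third coordinate. -/
def unitTriangle : Set (ℝ × ℝ) := {p | 0 ≤ p.1 ∧ 0 ≤ p.2 ∧ p.1 + p.2 ≤ 1}

lemma measurableSet_unitTriangle : MeasurableSet unitTriangle :=
  (measurableSet_le measurable_const measurable_fst).inter <|
    (measurableSet_le measurable_const measurable_snd).inter <|
      measurableSet_le (measurable_fst.add measurable_snd) measurable_const

lemma unitTriangle_subset_Icc_prod_Icc : unitTriangle ⊆ Icc 0 1 ×ˢ Icc 0 1 := by
  rintro p ⟨h₁, h₂, h₃⟩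
  exact ⟨⟨h₁, by linarith⟩, ⟨h₂, by linarith⟩⟩

lemma one_sub_sub_nonneg {p : ℝ × ℝ} (hp : p ∈ unitTriangle) : 0 ≤ 1 - p.1 - p.2 := by
  rw [sub_sub]
  exact sub_nonneg.2 hp.2.2

lemma measurePreserving_swap_unitTriangle :
    MeasurePreserving Prod.swap (volume.restrict unitTriangle) (volume.restrict unitTriangle) := by
  have preimage_eq : Prod.swap ⁻¹' unitTriangle = unitTriangle := by
    ext p
    simp only [unitTriangle, mem_preimage, mem_ofPred_eq, Prod.fst_swap, Prod.snd_swap]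
    grind
  have h := (Measure.measurePreserving_swap (μ := (volume : Measure ℝ))
    (ν := (volume : Measure ℝ))).restrict_preimage measurableSet_unitTriangle
  rwa [preimage_eq] at h

lemma measurePreserving_reflect_unitTriangle :
    MeasurePreserving (fun p : ℝ × ℝ ↦ (p.1, 1 - p.1 - p.2))
      (volume.restrict unitTriangle) (volume.restrict unitTriangle) := by
  have preimage_eq : (fun p : ℝ × ℝ ↦ (p.1, 1 - p.1 - p.2)) ⁻¹' unitTriangle = unitTriangle := by
    ext p
    simp only [unitTriangle, mem_preimage, mem_ofPred_eq]
    grind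
  have reflect : MeasurePreserving (fun p : ℝ × ℝ ↦ (p.1, 1 - p.1 - p.2)) :=
    (MeasurePreserving.id volume).skew_product (by fun_prop) <| ae_of_all _ fun x ↦
      (Measure.measurePreserving_sub_left volume (1 - x)).map_eq
  have h := reflect.restrict_preimage measurableSet_unitTriangle
  rwa [preimage_eq] at h

lemma mul_rpow_sub_one_le_one {t : ℝ} (ha : 0 < a) (ht₀ : 0 ≤ t) (ht₁ : t ≤ 1) :
    t * t ^ (a - 1) ≤ 1 := by
  rw [← rpow_one_add' ht₀ (by linarith), add_sub_cancel]
  exact rpow_le_one ht₀ ht₁ ha.le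

lemma rpow_mul_rpow_mul_rpow_le_of_add_eq_one (ha : 0 < a) (hb : 0 < b) (hc : 0 < c) {r s t : ℝ}
    (hr : 0 ≤ r) (hs : 0 ≤ s) (ht : 0 ≤ t) (h : r + s + t = 1) :
    r ^ (a - 1) * s ^ (b - 1) * t ^ (c - 1) ≤
      s ^ (b - 1) * t ^ (c - 1) + r ^ (a - 1) * t ^ (c - 1) + r ^ (a - 1) * s ^ (b - 1) := by
  calc r ^ (a - 1) * s ^ (b - 1) * t ^ (c - 1)
      = (r + s + t) * (r ^ (a - 1) * s ^ (b - 1) * t ^ (c - 1)) := by rw [h, one_mul]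
    _ = r * r ^ (a - 1) * (s ^ (b - 1) * t ^ (c - 1))
        + s * s ^ (b - 1) * (r ^ (a - 1) * t ^ (c - 1))
        + t * t ^ (c - 1) * (r ^ (a - 1) * s ^ (b - 1)) := by ring
    _ ≤ s ^ (b - 1) * t ^ (c - 1) + r ^ (a - 1) * t ^ (c - 1) + r ^ (a - 1) * s ^ (b - 1) := by
      refine add_le_add_three ?_ ?_ ?_ <;> refine mul_le_of_le_one_left (by positivity) ?_
      · exact mul_rpow_sub_one_le_one ha hr (by linarith)
      · exact mul_rpow_sub_one_le_one hb hs (by linarith)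
      · exact mul_rpow_sub_one_le_one hc ht (by linarith)

/-- The density of the Dirichlet law with parameters `a, b, c` on the simplex, without its
normalizing constant `(mvBeta a b c)⁻¹`. -/
noncomputable def dirichletWeight (a b c : ℝ) (p : ℝ × ℝ) : ℝ :=
  p.1 ^ (a - 1) * p.2 ^ (b - 1) * (1 - p.1 - p.2) ^ (c - 1)

lemma dirichletWeight_nonneg {p : ℝ × ℝ} (hp : p ∈ unitTriangle) : 0 ≤ dirichletWeight a b c p :=
  mul_nonneg (mul_nonneg (rpow_nonneg hp.1 _) (rpow_nonneg hp.2.1 _))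
    (rpow_nonneg (one_sub_sub_nonneg hp) _)

lemma integrableOn_rpow_mul_rpow_unitTriangle (ha : 0 < a) (hb : 0 < b) :
    IntegrableOn (fun p : ℝ × ℝ ↦ p.1 ^ (a - 1) * p.2 ^ (b - 1)) unitTriangle := by
  have integrableOn_rpow {e : ℝ} (he : 0 < e) :
      IntegrableOn (fun t : ℝ ↦ t ^ (e - 1)) (Icc 0 1) := by
    rw [integrableOn_Icc_iff_integrableOn_Ioc,
      ← intervalIntegrable_iff_integrableOn_Ioc_of_le zero_le_one]
    exact intervalIntegral.intervalIntegrable_rpow' (by linarith)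
  have h := (integrableOn_rpow ha).mul_prod (integrableOn_rpow hb)
  rw [Measure.prod_restrict] at h
  exact IntegrableOn.mono_set h unitTriangle_subset_Icc_prod_Icc

lemma integrableOn_dirichletWeight (ha : 0 < a) (hb : 0 < b) (hc : 0 < c) :
    IntegrableOn (dirichletWeight a b c) unitTriangle := by
  have reflect {e : ℝ} (he : 0 < e) : IntegrableOn
      (fun p : ℝ × ℝ ↦ p.1 ^ (e - 1) * (1 - p.1 - p.2) ^ (c - 1)) unitTriangle :=
    measurePreserving_reflect_unitTriangle.integrable_comp_of_integrable
      (integrableOn_rpow_mul_rpow_unitTriangle he hc)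
  have swap_reflect : IntegrableOn
      (fun p : ℝ × ℝ ↦ p.2 ^ (b - 1) * (1 - p.1 - p.2) ^ (c - 1)) unitTriangle := by
    simp only [sub_right_comm (1 : ℝ) (Prod.fst _)]
    exact measurePreserving_swap_unitTriangle.integrable_comp_of_integrable (reflect hb)
  refine ((swap_reflect.add (reflect ha)).add
    (integrableOn_rpow_mul_rpow_unitTriangle ha hb)).mono' ?_ ?_
  · unfold dirichletWeight
    fun_prop
  · refine ae_restrict_of_forall_mem measurableSet_unitTriangle fun p hp ↦ ?_
    rw [norm_of_nonneg (dirichletWeight_nonneg hp)]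
    exact rpow_mul_rpow_mul_rpow_le_of_add_eq_one ha hb hc hp.1 hp.2.1 (one_sub_sub_nonneg hp)
      (by ring)

lemma integral_rpow_mul_rpow_mul_le_of_exponent_ge {α : Type*} [MeasurableSpace α] {μ : Measure α}
    {F G w : α → ℝ} (hF : AEStronglyMeasurable F μ) (hG : AEStronglyMeasurable G μ)
    (hF_mem : ∀ x, F x ∈ Icc (0 : ℝ) 1) (hG_mem : ∀ x, G x ∈ Icc (0 : ℝ) 1)
    (hw : Integrable w μ) (hw_nonneg : 0 ≤ᵐ[μ] w) {s s' t t' : ℝ}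
    (hs' : 0 ≤ s') (hs : s' ≤ s) (ht' : 0 ≤ t') (ht : t' ≤ t) :
    ∫ x, F x ^ s * G x ^ t * w x ∂μ ≤ ∫ x, F x ^ s' * G x ^ t' * w x ∂μ := by
  have rpow_mul_rpow_nonneg (u v : ℝ) (x : α) : 0 ≤ F x ^ u * G x ^ v :=
    mul_nonneg (rpow_nonneg (hF_mem x).1 u) (rpow_nonneg (hG_mem x).1 v)
  have norm_rpow_mul_rpow_le (x : α) : ‖F x ^ s' * G x ^ t'‖ ≤ 1 := by
    rw [norm_of_nonneg (rpow_mul_rpow_nonneg s' t' x)]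
    exact mul_le_one₀ (rpow_le_one (hF_mem x).1 (hF_mem x).2 hs') (rpow_nonneg (hG_mem x).1 t')
      (rpow_le_one (hG_mem x).1 (hG_mem x).2 ht')
  have rpow_mul_rpow_le (x : α) : F x ^ s * G x ^ t ≤ F x ^ s' * G x ^ t' :=
    mul_le_mul (rpow_le_rpow_of_exponent_ge' (hF_mem x).1 (hF_mem x).2 hs' hs)
      (rpow_le_rpow_of_exponent_ge' (hG_mem x).1 (hG_mem x).2 ht' ht)
      (rpow_nonneg (hG_mem x).1 t) (rpow_nonneg (hF_mem x).1 s')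
  refine integral_mono_of_nonneg ?_
    (hw.bdd_mul (by fun_prop) (ae_of_all _ norm_rpow_mul_rpow_le)) ?_
  · exact hw_nonneg.mono fun x hx ↦ mul_nonneg (rpow_mul_rpow_nonneg s t x) hx
  · exact hw_nonneg.mono fun x hx ↦ mul_le_mul_of_nonneg_right (rpow_mul_rpow_le x) hx

lemma mvBeta_pos (ha : 0 < a) (hb : 0 < b) (hc : 0 < c) : 0 < mvBeta a b c :=
  div_pos (mul_pos (mul_pos (Gamma_pos_of_pos ha) (Gamma_pos_of_pos hb)) (Gamma_pos_of_pos hc))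
    (Gamma_pos_of_pos (by positivity))

lemma mul_mul_Psi_eq_integral {ρ₁ ρ₂ x₁ x₂ : ℝ} (hρ₁ : ρ₁ ∈ Ioo (0 : ℝ) 1)
    (hρ₂ : ρ₂ ∈ Ioo (0 : ℝ) 1) (hx₁ : x₁ ≠ 0) (hx₂ : x₂ ≠ 0) :
    x₁ * x₂ * Psi x₁ x₂ ρ₁ ρ₂ = (mvBeta ρ₁ ρ₂ (1 - ρ₁ - ρ₂))⁻¹ *
      ∫ p in unitTriangle, cdf (betaMeasure ρ₁ (1 - ρ₁)) p.1 ^ (1 / x₁ - 1) *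
        cdf (betaMeasure ρ₂ (1 - ρ₂)) p.2 ^ (1 / x₂ - 1) *
        dirichletWeight ρ₁ ρ₂ (1 - ρ₁ - ρ₂) p := by
  rw [Psi, mul_assoc (x₁ * x₂)⁻¹, mul_inv_cancel_left₀ (mul_ne_zero hx₁ hx₂)]
  congr 1
  refine setIntegral_congr_fun measurableSet_unitTriangle fun p hp ↦ ?_
  obtain ⟨hp₁, hp₂⟩ := unitTriangle_subset_Icc_prod_Icc hp
  have exponent_eq : 1 - ρ₁ - ρ₂ - 1 = -ρ₁ - ρ₂ := by ring
  simp only [regIncBeta_eq_cdf hρ₁.1 (sub_pos.2 hρ₁.2) hp₁,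
    regIncBeta_eq_cdf hρ₂.1 (sub_pos.2 hρ₂.2) hp₂, dirichletWeight, exponent_eq, mul_assoc]

lemma one_div_sub_one_nonneg {x : ℝ} (hx : 0 < x) (hx_le : x ≤ 1) : 0 ≤ 1 / x - 1 :=
  sub_nonneg.2 (one_le_one_div hx hx_le)

end

theorem psi_mul_monotone (ρ₁ ρ₂ : ℝ)
    (hρ₁ : ρ₁ ∈ Set.Ioo (0:ℝ) 1) (hρ₂ : ρ₂ ∈ Set.Ioo (0:ℝ) 1) (hsum : ρ₁ + ρ₂ < 1)
    (x₁ x₁' x₂ x₂' : ℝ) (hx₁ : 0 < x₁) (hx₁' : x₁ ≤ x₁') (hx₁'' : x₁' ≤ 1)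
    (hx₂ : 0 < x₂) (hx₂' : x₂ ≤ x₂') (hx₂'' : x₂' ≤ 1) :
    x₁ * x₂ * Psi x₁ x₂ ρ₁ ρ₂ ≤ x₁' * x₂' * Psi x₁' x₂' ρ₁ ρ₂ := by
  have hx₁_pos' : 0 < x₁' := hx₁.trans_le hx₁'
  have hx₂_pos' : 0 < x₂' := hx₂.trans_le hx₂'
  have hρ₀ : 0 < 1 - ρ₁ - ρ₂ := by linarith
  have cdf_mem (μ : Measure ℝ) (t : ℝ) : ProbabilityTheory.cdf μ t ∈ Set.Icc (0 : ℝ) 1 :=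
    ⟨ProbabilityTheory.cdf_nonneg μ t, ProbabilityTheory.cdf_le_one μ t⟩
  have measurable_cdf (μ : Measure ℝ) : Measurable (ProbabilityTheory.cdf μ) :=
    (ProbabilityTheory.monotone_cdf μ).measurable
  rw [mul_mul_Psi_eq_integral hρ₁ hρ₂ hx₁.ne' hx₂.ne',
    mul_mul_Psi_eq_integral hρ₁ hρ₂ hx₁_pos'.ne' hx₂_pos'.ne']
  refine mul_le_mul_of_nonneg_left ?_ (inv_nonneg.2 (mvBeta_pos hρ₁.1 hρ₂.1 hρ₀).le)
  exact integral_rpow_mul_rpow_mul_le_of_exponent_ge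
    ((measurable_cdf _).comp measurable_fst).aestronglyMeasurable
    ((measurable_cdf _).comp measurable_snd).aestronglyMeasurable
    (fun p ↦ cdf_mem _ p.1) (fun p ↦ cdf_mem _ p.2)
    (integrableOn_dirichletWeight hρ₁.1 hρ₂.1 hρ₀)
    (ae_restrict_of_forall_mem measurableSet_unitTriangle fun p hp ↦ dirichletWeight_nonneg hp)
    (one_div_sub_one_nonneg hx₁_pos' hx₁'') (by gcongr)
    (one_div_sub_one_nonneg hx₂_pos' hx₂'') (by gcongr)
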